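/- Let g be an element of a group G acting linearly on a vector space V of dimension d over a field, and suppose G is generated by a conjugates of g together with no other elements needed, i.e. there exist a conjugates g_1,...,g_a of g with ⟨g_1,...,g_a⟩ = G. If G acts irreducibly on V with no nonzero fixed vectors, then dim C_V(g) ≤ ⌊(1 - 1/a)·d⌋. -/

import Mathlib

theorem stmt_6 {F : Type*} [Field F] {V : Type*} [AddCommGroup V] [Module F V]
    [FiniteDimensional F V] (d : ℕ) (hd : Module.finrank F V = d)
    (G : Subgroup (LinearMap.GeneralLinearGroup F V)) (g : LinearMap.GeneralLinearGroup F V)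
    (hg : g ∈ G) (a : ℕ) (ha : 0 < a) (gs : Fin a → LinearMap.GeneralLinearGroup F V)
    (hconj : ∀ i, ∃ h ∈ G, gs i = h * g * h⁻¹)
    (hgen : Subgroup.closure (Set.range gs) = G)
    (hirr : ∀ W : Submodule F V, (∀ h ∈ G, ∀ w ∈ W, (h : V →ₗ[F] V) w ∈ W) → W = ⊥ ∨ W = ⊤)
    (hnofix : ∀ v : V, (∀ h ∈ G, (h : V →ₗ[F] V) v = v) → v = 0) :
    (Module.finrank F ↥(LinearMap.ker ((g : V →ₗ[F] V) - LinearMap.id)) : ℤ)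
      ≤ ⌊(1 - (1 : ℚ) / a) * d⌋ := by
  choose h hG hh using hconj
  let T : V →ₗ[F] V := (g : V →ₗ[F] V) - LinearMap.id
  let Φ : V →ₗ[F] (Fin a → LinearMap.range T) :=
    LinearMap.pi (fun i => T.rangeRestrict ∘ₗ (((h i)⁻¹ : LinearMap.GeneralLinearGroup F V) : V →ₗ[F] V))
  have hinj : Function.Injective Φ := by
    rw [injective_iff_map_eq_zero]
    intro v hv
    have hfix : ∀ i, (gs i : V →ₗ[F] V) v = v := by
      intro i
      have h1 : T ((((h i)⁻¹ : LinearMap.GeneralLinearGroup F V) : V →ₗ[F] V) v) = 0 :=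
        congrArg Subtype.val (congrFun hv i)
      have h2 : (g : V →ₗ[F] V) ((((h i)⁻¹ : LinearMap.GeneralLinearGroup F V) : V →ₗ[F] V) v)
          = (((h i)⁻¹ : LinearMap.GeneralLinearGroup F V) : V →ₗ[F] V) v := sub_eq_zero.mp h1
      rw [hh i, Units.val_mul, Units.val_mul, Module.End.mul_apply, Module.End.mul_apply, h2,
        ← Module.End.mul_apply, Units.mul_inv, Module.End.one_apply]
    apply hnofix
    intro x hx
    rw [← hgen] at hx
    induction hx using Subgroup.closure_induction with
    | mem x hx => obtain ⟨i, rfl⟩ := hx; exact hfix i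
    | one => simp
    | mul x y _ _ hx hy => rw [Units.val_mul, Module.End.mul_apply, hy, hx]
    | inv x _ hx =>
      conv_lhs => rw [← hx]
      rw [← Module.End.mul_apply, Units.inv_mul, Module.End.one_apply]
  have h1 := LinearMap.finrank_le_finrank_of_injective hinj
  rw [Module.finrank_pi_fintype, Finset.sum_const, Finset.card_univ, Fintype.card_fin,
    smul_eq_mul, hd] at h1
  have h2 := LinearMap.finrank_range_add_finrank_ker T
  rw [hd] at h2
  change (Module.finrank F ↥(LinearMap.ker T) : ℤ) ≤ _
  rw [Int.le_floor]
  generalize Module.finrank F (LinearMap.ker T) = k at *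
  generalize Module.finrank F (LinearMap.range T) = r at *
  have ha' : (0 : ℚ) < a := by exact_mod_cast ha
  have h1' : (d : ℚ) ≤ a * r := by exact_mod_cast h1
  have h2' : (r : ℚ) + k = d := by exact_mod_cast h2
  have h3 : (d : ℚ) / a ≤ r := by
    rw [div_le_iff₀ ha']; linarith
  have h4 : (1 - (1 : ℚ) / a) * d = d - d / a := by ring
  rw [h4]
  push_cast
  linarith
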